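/- arXiv:1605.00873 — 5 statements merged into one kernel-verified Lean document; each statement's English description precedes it below -/
import Mathlib

section
/- Let θ > 0 and 0 < F < 1 be real numbers (so that log F < 0), and define L₀ = ( 1/θ - 2/(log F) - √( (2/(log F) - 1/θ)² + 4/(θ·log F) ) ) / 2. Then 0 < L₀ < 1/(2θ). (Note that the expression under the square root equals 1/θ² + 4/(log F)².) -/
/-! With `a = 1 / θ > 0` and `b = 2 / log F < 0`, the radicand equals `a ^ 2 + b ^ 2`, so `L₀` is
`(|a| + |b| - √(a ^ 2 + b ^ 2)) / 2`, the inradius of the right triangle with legs `|a|` and `|b|`.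
Both bounds compare the hypotenuse with the legs: it is shorter than their sum and longer than
`|b|`. -/

theorem abs_lt_sqrt_sq_add_sq {a : ℝ} (ha : a ≠ 0) (b : ℝ) : |b| < √(a ^ 2 + b ^ 2) := by
  rw [← Real.sqrt_sq_eq_abs]
  exact Real.sqrt_lt_sqrt (sq_nonneg b) (lt_add_of_pos_left _ (sq_pos_of_ne_zero ha))

theorem sqrt_sq_add_sq_lt_abs_add_abs {a b : ℝ} (ha : a ≠ 0) (hb : b ≠ 0) :
    √(a ^ 2 + b ^ 2) < |a| + |b| := by
  have ha' : 0 < |a| := abs_pos.mpr ha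
  have hb' : 0 < |b| := abs_pos.mpr hb
  rw [Real.sqrt_lt' (add_pos ha' hb')]
  calc a ^ 2 + b ^ 2 = |a| ^ 2 + |b| ^ 2 := by rw [sq_abs, sq_abs]
    _ < |a| ^ 2 + |b| ^ 2 + 2 * |a| * |b| := lt_add_of_pos_right _ (by positivity)
    _ = (|a| + |b|) ^ 2 := by ring

theorem two_div_sub_one_div_sq_add_four_div {K : Type*} [Field K] (x y : K) :
    (2 / y - 1 / x) ^ 2 + 4 / (x * y) = (1 / x) ^ 2 + (2 / y) ^ 2 := by
  ring

/-- For `θ > 0` and `0 < F < 1` (so `log F < 0`), the critical point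
`L₀ = (1/θ - 2/log F - √((2/log F - 1/θ)² + 4/(θ·log F)))/2`
of the total average rate function satisfies `0 < L₀ < 1/(2θ)`. -/
theorem L0_pos_and_lt_half_inv_theta
    (θ F : ℝ) (hθ : 0 < θ) (hF0 : 0 < F) (hF1 : F < 1) :
    0 < (1 / θ - 2 / Real.log F
          - Real.sqrt ((2 / Real.log F - 1 / θ) ^ 2 + 4 / (θ * Real.log F))) / 2 ∧
    (1 / θ - 2 / Real.log F
          - Real.sqrt ((2 / Real.log F - 1 / θ) ^ 2 + 4 / (θ * Real.log F))) / 2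
        < 1 / (2 * θ) := by
  have ha : 0 < 1 / θ := one_div_pos.mpr hθ
  have hb : 2 / Real.log F < 0 := div_neg_of_pos_of_neg two_pos (Real.log_neg hF0 hF1)
  have hypotenuse_lt := sqrt_sq_add_sq_lt_abs_add_abs ha.ne' hb.ne
  have lt_hypotenuse := abs_lt_sqrt_sq_add_sq ha.ne' (2 / Real.log F)
  have half_inv : 1 / (2 * θ) = 1 / θ / 2 := by ring
  rw [abs_of_pos ha, abs_of_neg hb] at hypotenuse_lt
  rw [abs_of_neg hb] at lt_hypotenuse
  rw [two_div_sub_one_div_sq_add_four_div, half_inv]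
  constructor <;> linarith
end

section
/- Let θ > 0, C > 0 and 0 < F < 1 be real numbers, and let L₀ = ( 1/θ - 2/(log F) - √( 1/θ² + 4/(log F)² ) ) / 2. Then the total average rate function r_T(x) = x·(1 - xθ)·C·F^{x-1} is strictly increasing on [0, L₀] and strictly decreasing on [L₀, 1/θ]; consequently r_T attains its maximum over [0, 1/θ] at x = L₀. -/
/-!
The derivative of `r_T` is the positive factor `-θ log F · C F ^ (x - 1)` times
`(x - L₀) (x - L₁)`, where `L₀ ≤ L₁` are the two critical points, and `L₁` is not to the left of
`1 / θ`. So `r_T` increases up to `L₀` and then decreases up to `L₁`, in particular up to `1 / θ`.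
-/

open Set

section MonotonicityFromDerivative

variable {f w : ℝ → ℝ} {a b : ℝ}

theorem strictMonoOn_Iic_of_hasDerivAt_mul_sub_mul_sub
    (hf : ∀ x, HasDerivAt f (w x * ((x - a) * (x - b))) x) (hw : ∀ x, 0 < w x) (hab : a ≤ b) :
    StrictMonoOn f (Iic a) := by
  refine strictMonoOn_of_deriv_pos (convex_Iic a) (HasDerivAt.continuousOn fun x _ => hf x)
    fun x hx => ?_
  rw [interior_Iic] at hx
  rw [(hf x).deriv]
  exact mul_pos (hw x) (mul_pos_of_neg_of_neg (sub_neg.2 hx) (sub_neg.2 (hx.trans_le hab)))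

theorem strictAntiOn_Icc_of_hasDerivAt_mul_sub_mul_sub
    (hf : ∀ x, HasDerivAt f (w x * ((x - a) * (x - b))) x) (hw : ∀ x, 0 < w x) :
    StrictAntiOn f (Icc a b) := by
  refine strictAntiOn_of_deriv_neg (convex_Icc a b) (HasDerivAt.continuousOn fun x _ => hf x)
    fun x hx => ?_
  rw [interior_Icc] at hx
  rw [(hf x).deriv]
  exact mul_neg_of_pos_of_neg (hw x)
    (mul_neg_of_pos_of_neg (sub_pos.2 hx.1) (sub_neg.2 hx.2))

end MonotonicityFromDerivative

section CriticalPoints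

/-- The smaller root of `1 - 2 θ x + ℓ x (1 - x θ)`; for `ℓ = log F` these roots are the critical
points of the total average rate, and this one is the paper's `L₀`. -/
noncomputable def lowerCriticalPoint (θ ℓ : ℝ) : ℝ :=
  (1 / θ - 2 / ℓ - Real.sqrt (1 / θ ^ 2 + 4 / ℓ ^ 2)) / 2

/-- The larger root of `1 - 2 θ x + ℓ x (1 - x θ)`, i.e. for `ℓ = log F` the other critical point
of the total average rate. -/
noncomputable def upperCriticalPoint (θ ℓ : ℝ) : ℝ :=
  (1 / θ - 2 / ℓ + Real.sqrt (1 / θ ^ 2 + 4 / ℓ ^ 2)) / 2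

variable {θ ℓ : ℝ}

theorem lowerCriticalPoint_le_upperCriticalPoint (θ ℓ : ℝ) :
    lowerCriticalPoint θ ℓ ≤ upperCriticalPoint θ ℓ := by
  have hsqrt := Real.sqrt_nonneg (1 / θ ^ 2 + 4 / ℓ ^ 2)
  unfold lowerCriticalPoint upperCriticalPoint
  linarith

theorem one_div_le_upperCriticalPoint (θ : ℝ) (hℓ : ℓ ≤ 0) :
    1 / θ ≤ upperCriticalPoint θ ℓ := by
  have hsqrt : 1 / θ ≤ Real.sqrt (1 / θ ^ 2 + 4 / ℓ ^ 2) := by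
    refine Real.le_sqrt_of_sq_le ?_
    rw [one_div_pow]
    exact le_add_of_nonneg_right (by positivity)
  have hdiv : 2 / ℓ ≤ 0 := div_nonpos_of_nonneg_of_nonpos zero_le_two hℓ
  unfold upperCriticalPoint
  linarith

theorem lowerCriticalPoint_add_upperCriticalPoint (θ ℓ : ℝ) :
    lowerCriticalPoint θ ℓ + upperCriticalPoint θ ℓ = 1 / θ - 2 / ℓ := by
  unfold lowerCriticalPoint upperCriticalPoint
  ring

theorem lowerCriticalPoint_mul_upperCriticalPoint (θ ℓ : ℝ) :
    lowerCriticalPoint θ ℓ * upperCriticalPoint θ ℓ = -(1 / (θ * ℓ)) := by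
  have hsq : Real.sqrt (1 / θ ^ 2 + 4 / ℓ ^ 2) ^ 2 = 1 / θ ^ 2 + 4 / ℓ ^ 2 :=
    Real.sq_sqrt (by positivity)
  unfold lowerCriticalPoint upperCriticalPoint
  linear_combination -hsq / 4

theorem mul_sub_lowerCriticalPoint_mul_sub_upperCriticalPoint (hθ : θ ≠ 0) (hℓ : ℓ ≠ 0) (x : ℝ) :
    -θ * ℓ * ((x - lowerCriticalPoint θ ℓ) * (x - upperCriticalPoint θ ℓ)) =
      1 - 2 * θ * x + ℓ * (x * (1 - x * θ)) := by
  calc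
    _ = -θ * ℓ * (x ^ 2 - (lowerCriticalPoint θ ℓ + upperCriticalPoint θ ℓ) * x +
          lowerCriticalPoint θ ℓ * upperCriticalPoint θ ℓ) := by ring
    _ = -θ * ℓ * (x ^ 2 - (1 / θ - 2 / ℓ) * x + -(1 / (θ * ℓ))) := by
      rw [lowerCriticalPoint_add_upperCriticalPoint, lowerCriticalPoint_mul_upperCriticalPoint]
    _ = 1 - 2 * θ * x + ℓ * (x * (1 - x * θ)) := by
      field_simp
      ring

end CriticalPoints

section TotalAvgRate

/-- The total average transmission rate `r_T` of the symmetric imperfect-case system, as a function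
of a real number `x` of scheduled pairs. -/
noncomputable def totalAvgRate (θ C F x : ℝ) : ℝ :=
  x * (1 - x * θ) * C * F ^ (x - 1)

variable {θ C F : ℝ}

theorem hasDerivAt_totalAvgRate (θ C : ℝ) (hF : 0 < F) (x : ℝ) :
    HasDerivAt (totalAvgRate θ C F)
      (C * F ^ (x - 1) * (1 - 2 * θ * x + Real.log F * (x * (1 - x * θ)))) x := by
  have hpow : HasDerivAt (fun y => F ^ (y - 1)) (Real.log F * 1 * F ^ (x - 1)) x :=
    ((hasDerivAt_id' x).sub_const 1).const_rpow hF
  have hpoly : HasDerivAt (fun y => y * (1 - y * θ) * C)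
      ((1 * (1 - x * θ) + x * -(1 * θ)) * C) x :=
    ((hasDerivAt_id' x).fun_mul (((hasDerivAt_id' x).mul_const θ).const_sub 1)).mul_const C
  exact (hpoly.fun_mul hpow).congr_deriv (by ring)

theorem hasDerivAt_totalAvgRate_factored (C : ℝ) (hθ : θ ≠ 0) (hF0 : 0 < F) (hF1 : F ≠ 1) (x : ℝ) :
    HasDerivAt (totalAvgRate θ C F)
      (C * F ^ (x - 1) * (-θ * Real.log F) *
        ((x - lowerCriticalPoint θ (Real.log F)) * (x - upperCriticalPoint θ (Real.log F)))) x := by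
  have hlog : Real.log F ≠ 0 := Real.log_ne_zero_of_pos_of_ne_one hF0 hF1
  rw [mul_assoc, mul_sub_lowerCriticalPoint_mul_sub_upperCriticalPoint hθ hlog]
  exact hasDerivAt_totalAvgRate θ C hF0 x

theorem mul_rpow_mul_neg_mul_log_pos (hθ : 0 < θ) (hC : 0 < C) (hF0 : 0 < F) (hF1 : F < 1)
    (x : ℝ) : 0 < C * F ^ (x - 1) * (-θ * Real.log F) :=
  mul_pos (mul_pos hC (Real.rpow_pos_of_pos hF0 _))
    (mul_pos_of_neg_of_neg (neg_neg_of_pos hθ) (Real.log_neg hF0 hF1))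

theorem strictMonoOn_totalAvgRate (hθ : 0 < θ) (hC : 0 < C) (hF0 : 0 < F) (hF1 : F < 1) :
    StrictMonoOn (totalAvgRate θ C F) (Iic (lowerCriticalPoint θ (Real.log F))) :=
  strictMonoOn_Iic_of_hasDerivAt_mul_sub_mul_sub
    (hasDerivAt_totalAvgRate_factored C hθ.ne' hF0 hF1.ne)
    (mul_rpow_mul_neg_mul_log_pos hθ hC hF0 hF1)
    (lowerCriticalPoint_le_upperCriticalPoint _ _)

theorem strictAntiOn_totalAvgRate (hθ : 0 < θ) (hC : 0 < C) (hF0 : 0 < F) (hF1 : F < 1) :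
    StrictAntiOn (totalAvgRate θ C F)
      (Icc (lowerCriticalPoint θ (Real.log F)) (upperCriticalPoint θ (Real.log F))) :=
  strictAntiOn_Icc_of_hasDerivAt_mul_sub_mul_sub
    (hasDerivAt_totalAvgRate_factored C hθ.ne' hF0 hF1.ne)
    (mul_rpow_mul_neg_mul_log_pos hθ hC hF0 hF1)

end TotalAvgRate

/-- For `θ > 0`, `C > 0`, `0 < F < 1` and
`L₀ = (1/θ - 2/log F - √(1/θ² + 4/(log F)²))/2`, the total average rate function
`r_T(x) = x·(1 - xθ)·C·F^(x-1)` is strictly increasing on `[0, L₀]`, strictly decreasing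
on `[L₀, 1/θ]`, and hence attains its maximum over `[0, 1/θ]` at `x = L₀`. -/
theorem total_avg_rate_max_at_L0
    (θ C F : ℝ) (hθ : 0 < θ) (hC : 0 < C) (hF0 : 0 < F) (hF1 : F < 1) :
    let L₀ : ℝ := (1 / θ - 2 / Real.log F
        - Real.sqrt (1 / θ ^ 2 + 4 / Real.log F ^ 2)) / 2
    let rT : ℝ → ℝ := fun x => x * (1 - x * θ) * C * F ^ (x - 1)
    StrictMonoOn rT (Set.Icc 0 L₀) ∧ StrictAntiOn rT (Set.Icc L₀ (1 / θ)) ∧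
      ∀ x ∈ Set.Icc (0 : ℝ) (1 / θ), rT x ≤ rT L₀ := by
  intro L₀ rT
  have hmono : StrictMonoOn rT (Icc 0 L₀) :=
    (strictMonoOn_totalAvgRate hθ hC hF0 hF1).mono Icc_subset_Iic_self
  have hanti : StrictAntiOn rT (Icc L₀ (1 / θ)) :=
    (strictAntiOn_totalAvgRate hθ hC hF0 hF1).mono <|
      Icc_subset_Icc_right (one_div_le_upperCriticalPoint θ (Real.log_neg hF0 hF1).le)
  exact ⟨hmono, hanti, isMaxOn_Icc_of_mono_anti hmono.monotoneOn hanti.antitoneOn⟩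
end

section
/- Let N ≥ 1, let S_L ⊆ ℝ^N denote the set of 0-1 vectors with exactly L coordinates equal to 1, let r : ℕ → ℝ be nonnegative, and let 1 ≤ L_I ≤ N. Assume L·r(L) ≤ L_I·r(L_I) for every L with L_I ≤ L ≤ N. Then for every such L and every s ∈ S_L, the point r(L)·s lies in the convex hull of {0} ∪ { r(L_I)·s' : s' ∈ S_{L_I} }. Consequently, every point of the set Ī = ⋃_{L_I < L ≤ N} { r(L)·s : s ∈ S_L } lies inside the convex hull of {0} ∪ ⋃_{1 ≤ ℓ ≤ L_I} { r(ℓ)·s' : s' ∈ S_ℓ }. -/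
/-- `schedSet N L` is the set of 0-1 vectors in `ℝ^N` with exactly `L` coordinates equal to 1
(equivalently, with `ℓ¹`-norm `L`). -/
def schedSet (N L : ℕ) : Set (Fin N → ℝ) :=
  {s | (∀ i, s i = 0 ∨ s i = 1) ∧ ∑ i, s i = L}

/-!
Averaging over all `ℓ`-element subsets of an `L`-element set gives each element weight `ℓ / L`, so
for `s ∈ S_L` and `ℓ ≤ L` the vector `(ℓ / L) • s` is the mean of the vectors of `S_ℓ` supported
inside `s`. With `ℓ = L_I`, the bound `L * r L ≤ L_I * r L_I` makes `r L • s` a multiple of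
`(L_I / L) • s` with factor between `0` and `r L_I`, so it lies on the segment from `0` to
`r L_I • (L_I / L) • s`.
-/

section SubsetSums

open Finset

variable {ι E : Type*}

lemma sum_powersetCard_add_one_sum [AddCommMonoid E] (v : ι → E) (t : Finset ι) (k : ℕ) :
    ∑ u ∈ t.powersetCard (k + 1), ∑ i ∈ u, v i = (#t - 1).choose k • ∑ i ∈ t, v i := by
  classical
  have card_containing : ∀ i ∈ t,
      #{u ∈ t.powersetCard (k + 1) | i ∈ u} = (#t - 1).choose k := fun i hi => by
    simpa using card_filter_powersetCard_subset {i} t (k + 1) (by simpa using hi) (by simp)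
  calc
    ∑ u ∈ t.powersetCard (k + 1), ∑ i ∈ u, v i
      = ∑ i ∈ t, ∑ u ∈ t.powersetCard (k + 1) with i ∈ u, v i :=
        sum_comm' fun u i => by
          simp only [mem_filter, mem_powersetCard]
          exact ⟨fun h => ⟨⟨h.1, h.2⟩, h.1.1 h.2⟩, fun h => h.1⟩
    _ = ∑ i ∈ t, (#t - 1).choose k • v i :=
        sum_congr rfl fun i hi => by rw [sum_const, card_containing i hi]
    _ = (#t - 1).choose k • ∑ i ∈ t, v i := sum_nsmul _ _ _

lemma sum_inv_choose_smul_sum_powersetCard {𝕜 : Type*} [Field 𝕜] [CharZero 𝕜] [AddCommMonoid E]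
    [Module 𝕜 E] (v : ι → E) {t : Finset ι} {ℓ : ℕ} (hℓ : ℓ ≤ #t) :
    ∑ u ∈ t.powersetCard ℓ, ((#t).choose ℓ : 𝕜)⁻¹ • ∑ i ∈ u, v i =
      ((ℓ : 𝕜) / #t) • ∑ i ∈ t, v i := by
  rcases ℓ with _ | k
  · simp
  obtain ⟨n, hn⟩ : ∃ n, #t = n + 1 := ⟨#t - 1, by omega⟩
  have hchoose : ((n + 1).choose (k + 1) : 𝕜) ≠ 0 :=
    Nat.cast_ne_zero.2 (Nat.choose_pos (hn ▸ hℓ)).ne'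
  have absorption : (n + 1 : 𝕜) * n.choose k = (n + 1).choose (k + 1) * (k + 1) := by
    exact_mod_cast Nat.add_one_mul_choose_eq n k
  rw [← smul_sum, sum_powersetCard_add_one_sum, ← Nat.cast_smul_eq_nsmul 𝕜, smul_smul, hn,
    Nat.add_sub_cancel]
  congr 1
  push_cast
  field_simp
  linear_combination absorption

lemma div_smul_sum_mem_convexHull {𝕜 : Type*} [Field 𝕜] [LinearOrder 𝕜] [IsStrictOrderedRing 𝕜]
    [AddCommGroup E] [Module 𝕜 E] (v : ι → E) {t : Finset ι} {ℓ : ℕ} (hℓ : ℓ ≤ #t) :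
    ((ℓ : 𝕜) / #t) • ∑ i ∈ t, v i ∈
      convexHull 𝕜 ((fun u => ∑ i ∈ u, v i) '' (t.powersetCard ℓ : Set (Finset ι))) := by
  have hchoose : ((#t).choose ℓ : 𝕜) ≠ 0 := Nat.cast_ne_zero.2 (Nat.choose_pos hℓ).ne'
  rw [← sum_inv_choose_smul_sum_powersetCard v hℓ]
  refine (convex_convexHull 𝕜 _).sum_mem (fun _ _ => by positivity) ?_
    fun u hu => subset_convexHull 𝕜 _ (Set.mem_image_of_mem _ hu)
  rw [sum_const, card_powersetCard, nsmul_eq_mul, mul_inv_cancel₀ hchoose]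

end SubsetSums

open scoped Pointwise in
lemma smul_mem_convexHull_zero_union_image_smul {𝕜 E : Type*} [Field 𝕜] [LinearOrder 𝕜]
    [IsStrictOrderedRing 𝕜] [AddCommGroup E] [Module 𝕜 E] {A : Set E} {x : E} {a b : 𝕜}
    (hx : x ∈ convexHull 𝕜 A) (ha : 0 ≤ a) (hab : a ≤ b) :
    a • x ∈ convexHull 𝕜 ({0} ∪ (fun y => b • y) '' A) := by
  have hb : 0 ≤ b := ha.trans hab
  have hzero : (0 : E) ∈ convexHull 𝕜 ({0} ∪ (fun y => b • y) '' A) :=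
    subset_convexHull 𝕜 _ (Or.inl rfl)
  have hbx : b • x ∈ convexHull 𝕜 ({0} ∪ (fun y => b • y) '' A) := by
    refine convexHull_mono Set.subset_union_right ?_
    rw [Set.image_smul, convexHull_smul]
    exact Set.smul_mem_smul_set hx
  have hax : a • x = (a / b) • b • x := by
    rw [smul_smul, div_mul_cancel_of_imp fun h => le_antisymm (h ▸ hab) ha]
  rw [hax]
  exact (convex_convexHull 𝕜 _).smul_mem_of_zero_mem hzero hbx
    ⟨div_nonneg ha hb, div_le_one_of_le₀ hab hb⟩

/-- The vertices of the hypersimplex of order `L` in `ι → 𝕜`: the 0-1 vectors with exactly `L`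
coordinates equal to 1, a condition encoded through the coordinate sum. For `ι = Fin N` and `𝕜 = ℝ`
this unfolds to `schedSet N L`, for which it stands in over general index types and scalars. -/
def hypersimplexVertices (𝕜 ι : Type*) [Semiring 𝕜] [Fintype ι] (L : ℕ) : Set (ι → 𝕜) :=
  {s | (∀ i, s i = 0 ∨ s i = 1) ∧ ∑ i, s i = L}

section Hypersimplex

open Finset

variable {𝕜 ι : Type*} [Fintype ι] {L ℓ : ℕ} {s : ι → 𝕜}

lemma mem_hypersimplexVertices_iff [Semiring 𝕜] [CharZero 𝕜] [DecidableEq ι] :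
    s ∈ hypersimplexVertices 𝕜 ι L ↔
      ∃ t : Finset ι, #t = L ∧ ∑ i ∈ t, Pi.single i 1 = s := by
  classical
  have sum_single_apply (t : Finset ι) (j : ι) :
      (∑ i ∈ t, Pi.single i 1 : ι → 𝕜) j = if j ∈ t then 1 else 0 := by
    simp [Finset.sum_apply, Pi.single_apply]
  constructor
  · rintro ⟨h01, hsum⟩
    have hs (j : ι) : s j = if s j = 1 then 1 else 0 := by
      rcases h01 j with h | h <;> simp [h]
    refine ⟨({i | s i = 1} : Finset ι), ?_, ?_⟩
    · rw [sum_congr rfl fun j _ => hs j, sum_boole] at hsum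
      exact_mod_cast hsum
    · ext j
      simpa [sum_single_apply] using (hs j).symm
  · rintro ⟨t, rfl, rfl⟩
    refine ⟨fun j => ?_, ?_⟩
    · rw [sum_single_apply]
      exact (ite_eq_or_eq _ _ _).symm
    · simp [sum_single_apply]

variable [Field 𝕜] [LinearOrder 𝕜] [IsStrictOrderedRing 𝕜]

lemma div_smul_mem_convexHull_hypersimplexVertices (hℓ : ℓ ≤ L)
    (hs : s ∈ hypersimplexVertices 𝕜 ι L) :
    ((ℓ : 𝕜) / L) • s ∈ convexHull 𝕜 (hypersimplexVertices 𝕜 ι ℓ) := by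
  classical
  obtain ⟨t, rfl, rfl⟩ := mem_hypersimplexVertices_iff.1 hs
  refine convexHull_mono ?_ (div_smul_sum_mem_convexHull _ hℓ)
  rintro _ ⟨u, hu, rfl⟩
  exact mem_hypersimplexVertices_iff.2 ⟨u, (mem_powersetCard.1 hu).2, rfl⟩

lemma smul_mem_convexHull_zero_union_hypersimplexVertices {a b : 𝕜} (hℓ : 0 < ℓ) (hℓL : ℓ ≤ L)
    (hs : s ∈ hypersimplexVertices 𝕜 ι L) (ha : 0 ≤ a) (hab : L * a ≤ ℓ * b) :
    a • s ∈ convexHull 𝕜 ({0} ∪ (fun s' => b • s') '' hypersimplexVertices 𝕜 ι ℓ) := by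
  have hℓ_pos : (0 : 𝕜) < ℓ := Nat.cast_pos.2 hℓ
  have hL_pos : (0 : 𝕜) < L := Nat.cast_pos.2 (hℓ.trans_le hℓL)
  have hs_rescale : a • s = (L * a / ℓ) • ((ℓ : 𝕜) / L) • s := by
    rw [smul_smul]
    congr 1
    field_simp
  rw [hs_rescale]
  exact smul_mem_convexHull_zero_union_image_smul
    (div_smul_mem_convexHull_hypersimplexVertices hℓL hs) (by positivity)
    ((div_le_iff₀' hℓ_pos).2 hab)

theorem ratePoints_mem_convexHull_general {L_I : ℕ} (hL_I : 1 ≤ L_I) {r : ℕ → 𝕜}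
    (hr : ∀ L, 0 ≤ r L)
    (hmax : ∀ L, L_I ≤ L → L ≤ Fintype.card ι → (L : 𝕜) * r L ≤ L_I * r L_I) :
    (∀ L, L_I ≤ L → L ≤ Fintype.card ι → ∀ s ∈ hypersimplexVertices 𝕜 ι L,
        r L • s ∈
          convexHull 𝕜 ({0} ∪ (fun s' => r L_I • s') '' hypersimplexVertices 𝕜 ι L_I)) ∧
    (∀ x ∈ ⋃ L ∈ Set.Ioc L_I (Fintype.card ι),
          (fun s => r L • s) '' hypersimplexVertices 𝕜 ι L,
        x ∈ convexHull 𝕜 ({0} ∪ ⋃ ℓ ∈ Set.Icc 1 L_I,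
          (fun s' => r ℓ • s') '' hypersimplexVertices 𝕜 ι ℓ)) := by
  have mem_hull : ∀ L, L_I ≤ L → L ≤ Fintype.card ι → ∀ s ∈ hypersimplexVertices 𝕜 ι L,
      r L • s ∈
        convexHull 𝕜 ({0} ∪ (fun s' => r L_I • s') '' hypersimplexVertices 𝕜 ι L_I) :=
    fun L hL hLι s hs => smul_mem_convexHull_zero_union_hypersimplexVertices hL_I hL hs (hr L)
      (hmax L hL hLι)
  refine ⟨mem_hull, fun x hx => ?_⟩
  simp only [Set.mem_iUnion] at hx
  obtain ⟨L, hL, s, hs, rfl⟩ := hx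
  exact convexHull_mono
    (Set.union_subset_union_right _ (Set.subset_biUnion_of_mem (Set.right_mem_Icc.2 hL_I)))
    (mem_hull L hL.1.le hL.2 s hs)

end Hypersimplex

/-- If `r : ℕ → ℝ` is nonnegative, `1 ≤ L_I ≤ N` and `L·r(L) ≤ L_I·r(L_I)` for all
`L_I ≤ L ≤ N`, then for every such `L` and every `s ∈ S_L` the rate point `r(L) • s` lies in
the convex hull of `{0} ∪ { r(L_I) • s' : s' ∈ S_{L_I} }`; consequently every point of
`Ī = ⋃_{L_I < L ≤ N} { r(L) • s : s ∈ S_L }` lies inside the convex hull of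
`{0} ∪ ⋃_{1 ≤ ℓ ≤ L_I} { r(ℓ) • s' : s' ∈ S_ℓ }`. -/
theorem ratePoints_mem_convexHull
    (N L_I : ℕ) (hLI1 : 1 ≤ L_I) (hLIN : L_I ≤ N)
    (r : ℕ → ℝ) (hr : ∀ L, 0 ≤ r L)
    (hmax : ∀ L, L_I ≤ L → L ≤ N → (L : ℝ) * r L ≤ (L_I : ℝ) * r L_I) :
    (∀ L, L_I ≤ L → L ≤ N → ∀ s ∈ schedSet N L,
        r L • s ∈ convexHull ℝ ({0} ∪ (fun s' => r L_I • s') '' schedSet N L_I)) ∧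
    (∀ x ∈ ⋃ L ∈ Set.Ioc L_I N, (fun s => r L • s) '' schedSet N L,
        x ∈ convexHull ℝ
          ({0} ∪ ⋃ ℓ ∈ Set.Icc 1 L_I, (fun s' => r ℓ • s') '' schedSet N ℓ)) := by
  have h := ratePoints_mem_convexHull_general (ι := Fin N) hLI1 hr
  rw [Fintype.card_fin] at h
  exact h hmax
end

section
/- Let θ > 0, C > 0, 0 < F < 1 and let N ≥ 1 be a natural number with N·θ < 1. Define r(L) = (1 - Lθ)·C·F^{L-1} and μ(L) = (1 - Lθ)·C for L ∈ {1,…,N}, and let S_L ⊆ ℝ^N be the set of 0-1 vectors with exactly L ones. Let L_I ∈ {1,…,N} maximize L ↦ L·r(L) over {1,…,N} and let L_P ∈ {1,…,N} maximize L ↦ L·μ(L) over {1,…,N}. Set β = (L_I·r(L_I)) / (L_P·μ(L_P)). Then β ≤ 1, and for every point x in the convex hull of {0} ∪ ⋃_{L=1}^{L_P} { μ(L)·s : s ∈ S_L }, the scaled point β·x lies in the convex hull of {0} ∪ ⋃_{L=1}^{L_I} { r(L)·s : s ∈ S_L }. That is, the imperfect-case stability region contains the fraction β = r_T(L_I)/μ_T(L_P)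 of the perfect-case stability region. -/
/-!
A 0-1 vector with `L` ones is `L / K` times the average of the vectors with `K` ones below it.
Hence serving `L` active users at rate `a` each lies in the imperfect region as soon as
either `L ≤ L_I` and `a ≤ r L`, or `L_I ≤ L` and the total rate satisfies `L * a ≤ L_I * r L_I`.
For `a = β * μ L` the second inequality is the maximality of the perfect total rate at `L_P`.
The same maximality, compared with `L_I`, bounds `β` by the interference factor `F ^ (L_I - 1)`,
and this factor decreases with the number of active users, which gives the first inequality.
-/

section SubsetSums

open Finset

variable {ι E : Type*}

theorem sum_powersetCard_sum [AddCommMonoid E] (T : Finset ι) {k : ℕ} (hk : 1 ≤ k) (v : ι → E) :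
    ∑ U ∈ T.powersetCard k, ∑ i ∈ U, v i = (#T - 1).choose (k - 1) • ∑ i ∈ T, v i := by
  classical
  have hmem : ∀ U i, U ∈ T.powersetCard k ∧ i ∈ U ↔
      U ∈ {U ∈ T.powersetCard k | {i} ⊆ U} ∧ i ∈ T := by
    simp only [mem_filter, mem_powersetCard, singleton_subset_iff]
    exact fun U i => ⟨fun ⟨hU, hi⟩ => ⟨⟨hU, hi⟩, hU.1 hi⟩, fun h => h.1⟩
  rw [sum_comm' hmem, smul_sum]
  refine sum_congr rfl fun i hi => ?_
  rw [sum_const, card_filter_powersetCard_subset {i} T k (singleton_subset_iff.mpr hi)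
    (by rwa [card_singleton]), card_singleton]

theorem smul_sum_mem_convexHull_powersetCard {𝕜 : Type*} [Field 𝕜] [LinearOrder 𝕜]
    [IsStrictOrderedRing 𝕜] [AddCommGroup E] [Module 𝕜 E] {T : Finset ι} {k : ℕ} (hk : k ≤ #T)
    (v : ι → E) :
    ((k : 𝕜) / #T) • ∑ i ∈ T, v i ∈
      convexHull 𝕜 ((fun U => ∑ i ∈ U, v i) '' (T.powersetCard k : Set (Finset ι))) := by
  rcases k.eq_zero_or_pos with rfl | hk_pos
  · simp
  have hT : (#T : 𝕜) ≠ 0 := by exact_mod_cast (hk_pos.trans_le hk).ne'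
  have hchoose : 0 < ((#T).choose k : 𝕜) := by exact_mod_cast Nat.choose_pos hk
  have hcount : (#T : 𝕜) * (#T - 1).choose (k - 1) = (#T).choose k * k := by
    have h := Nat.add_one_mul_choose_eq (#T - 1) (k - 1)
    rw [Nat.sub_add_cancel (hk_pos.trans_le hk), Nat.sub_add_cancel hk_pos] at h
    exact_mod_cast h
  have haverage : ((k : 𝕜) / #T) • ∑ i ∈ T, v i =
      (T.powersetCard k).centerMass (fun _ => (1 : 𝕜)) fun U => ∑ i ∈ U, v i := by
    simp only [centerMass, one_smul, sum_const, card_powersetCard, nsmul_one]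
    rw [sum_powersetCard_sum T hk_pos, ← Nat.cast_smul_eq_nsmul 𝕜, smul_smul]
    congr 1
    field_simp
    linear_combination -hcount
  rw [haverage]
  refine centerMass_mem_convexHull _ (fun _ _ => zero_le_one) ?_
    fun U hU => Set.mem_image_of_mem _ hU
  simpa using hchoose

end SubsetSums

section Convexity

variable {𝕜 E : Type*} [AddCommGroup E]

theorem smul_mem_of_mem_convexHull [CommSemiring 𝕜] [PartialOrder 𝕜] [Module 𝕜 E]
    {s t : Set E} (ht : Convex 𝕜 t) {c : 𝕜} (h : ∀ y ∈ s, c • y ∈ t) {x : E}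
    (hx : x ∈ convexHull 𝕜 s) : c • x ∈ t :=
  convexHull_min h (ht.smul_preimage c) hx

theorem smul_mem_of_starConvex_zero_of_le [Field 𝕜] [LinearOrder 𝕜] [IsStrictOrderedRing 𝕜]
    [Module 𝕜 E] {s : Set E} (hs : StarConvex 𝕜 0 s) {a b : 𝕜} (ha : 0 ≤ a) (hab : a ≤ b)
    {x : E} (hx : b • x ∈ s) : a • x ∈ s := by
  have h := starConvex_zero_iff.mp hs hx (div_nonneg ha (ha.trans hab))
    (div_le_one_of_le₀ hab (ha.trans hab))
  rwa [smul_smul, div_mul_cancel_of_imp fun hb => le_antisymm (hab.trans_eq hb) ha] at h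

end Convexity

theorem mem_schedSet_iff_exists_finset {N L : ℕ} {s : Fin N → ℝ} :
    s ∈ schedSet N L ↔ ∃ T : Finset (Fin N), T.card = L ∧ ∑ i ∈ T, Pi.single i 1 = s := by
  have hsingle : ∀ (T : Finset (Fin N)) (j : Fin N),
      (∑ i ∈ T, Pi.single i 1 : Fin N → ℝ) j = if j ∈ T then 1 else 0 := fun T j => by
    rw [Finset.sum_apply, Finset.sum_pi_single]
  constructor
  · rintro ⟨h01, hsum⟩
    have hs : ∀ j, (if s j = 1 then 1 else 0) = s j := fun j => by
      rcases h01 j with h | h <;> simp [h]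
    refine ⟨Finset.univ.filter fun j => s j = 1, ?_, ?_⟩
    · rw [← Nat.cast_inj (R := ℝ), ← hsum, ← Finset.sum_boole]
      exact Finset.sum_congr rfl fun j _ => hs j
    · ext j
      simpa only [hsingle, Finset.mem_filter_univ] using hs j
  · rintro ⟨T, rfl, rfl⟩
    refine ⟨fun j => ?_, ?_⟩
    · rw [hsingle]
      exact (ite_eq_or_eq _ _ _).symm
    · simp [hsingle]

theorem smul_mem_convexHull_schedSet {N K L : ℕ} (hKL : K ≤ L) {s : Fin N → ℝ}
    (hs : s ∈ schedSet N L) : ((K : ℝ) / L) • s ∈ convexHull ℝ (schedSet N K) := by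
  obtain ⟨T, rfl, rfl⟩ := mem_schedSet_iff_exists_finset.mp hs
  refine convexHull_mono ?_ (smul_sum_mem_convexHull_powersetCard hKL _)
  rintro _ ⟨U, hU, rfl⟩
  exact mem_schedSet_iff_exists_finset.mpr ⟨U, (Finset.mem_powersetCard.mp hU).2, rfl⟩

/-- The stability region of a symmetric system of `N` pairs in which at most `K` pairs are
scheduled at a time and each of `L` scheduled pairs is served at rate `rate L`. The empty schedule
contributes the origin. -/
def stabilityRegion (N K : ℕ) (rate : ℕ → ℝ) : Set (Fin N → ℝ) :=
  convexHull ℝ ({0} ∪ ⋃ L ∈ Set.Icc 1 K, (fun s => rate L • s) '' schedSet N L)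

section StabilityRegion

variable {N K L M : ℕ} {r μ : ℕ → ℝ} {a β : ℝ} {s : Fin N → ℝ}

theorem convex_stabilityRegion : Convex ℝ (stabilityRegion N K r) :=
  convex_convexHull ℝ _

theorem zero_mem_stabilityRegion : 0 ∈ stabilityRegion N K r :=
  subset_convexHull ℝ _ (Or.inl rfl)

theorem rate_smul_mem_stabilityRegion (hL : L ∈ Set.Icc 1 K) (hs : s ∈ schedSet N L) :
    r L • s ∈ stabilityRegion N K r :=
  subset_convexHull ℝ _ (Or.inr (Set.mem_biUnion hL ⟨s, hs, rfl⟩))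

theorem smul_mem_stabilityRegion_of_le_rate (hL : L ∈ Set.Icc 1 K) (hs : s ∈ schedSet N L)
    (ha : 0 ≤ a) (har : a ≤ r L) : a • s ∈ stabilityRegion N K r :=
  smul_mem_of_starConvex_zero_of_le (convex_stabilityRegion.starConvex zero_mem_stabilityRegion)
    ha har (rate_smul_mem_stabilityRegion hL hs)

theorem smul_mem_stabilityRegion_of_le_total_rate (hK : 1 ≤ K) (hKL : K ≤ L)
    (hs : s ∈ schedSet N L) (ha : 0 ≤ a) (har : L * a ≤ K * r K) :
    a • s ∈ stabilityRegion N K r := by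
  have hmem : (r K * (K / L)) • s ∈ stabilityRegion N K r := by
    rw [← smul_smul]
    exact smul_mem_of_mem_convexHull convex_stabilityRegion
      (fun _ => rate_smul_mem_stabilityRegion ⟨hK, le_rfl⟩) (smul_mem_convexHull_schedSet hKL hs)
  have hL : (0 : ℝ) < L := by exact_mod_cast hK.trans hKL
  refine smul_mem_of_starConvex_zero_of_le
    (convex_stabilityRegion.starConvex zero_mem_stabilityRegion) ha ?_ hmem
  rw [← mul_div_assoc, le_div_iff₀ hL]
  linarith

theorem smul_mem_stabilityRegion_of_rate_le (hK : 1 ≤ K)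
    (hμ : ∀ L ∈ Set.Icc 1 M, 0 ≤ β * μ L)
    (hrate : ∀ L ∈ Set.Icc 1 M, L ≤ K → β * μ L ≤ r L)
    (htotal : ∀ L ∈ Set.Icc 1 M, K ≤ L → L * (β * μ L) ≤ K * r K)
    {x : Fin N → ℝ} (hx : x ∈ stabilityRegion N M μ) : β • x ∈ stabilityRegion N K r := by
  refine smul_mem_of_mem_convexHull convex_stabilityRegion ?_ hx
  rintro y (rfl | hy)
  · rw [smul_zero]
    exact zero_mem_stabilityRegion
  obtain ⟨L, hL, s, hs, rfl⟩ := Set.mem_iUnion₂.mp hy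
  rw [smul_smul]
  rcases le_total L K with hLK | hKL
  · exact smul_mem_stabilityRegion_of_le_rate ⟨hL.1, hLK⟩ hs (hμ L hL) (hrate L hL hLK)
  · exact smul_mem_stabilityRegion_of_le_total_rate hK hKL hs (hμ L hL) (htotal L hL hKL)

end StabilityRegion

theorem imperfect_achieves_fraction_of_perfect_general {N K M : ℕ} {r μ g : ℕ → ℝ}
    (hμ : ∀ L ∈ Set.Icc 1 N, 0 < μ L) (hg : ∀ L ∈ Set.Icc 1 N, g L ∈ Set.Icc 0 1)
    (hg_anti : AntitoneOn g (Set.Icc 1 N)) (hr : ∀ L ∈ Set.Icc 1 N, r L = μ L * g L)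
    (hK : K ∈ Set.Icc 1 N) (hM : M ∈ Set.Icc 1 N)
    (hmax : IsMaxOn (fun L : ℕ => L * μ L) (Set.Icc 1 N) M) :
    let β : ℝ := (K * r K) / (M * μ M)
    β ≤ 1 ∧ ∀ x ∈ stabilityRegion N M μ, β • x ∈ stabilityRegion N K r := by
  intro β
  have htotal_pos : 0 < M * μ M := mul_pos (by exact_mod_cast hM.1) (hμ M hM)
  have hβ_nonneg : 0 ≤ β := by
    have hrK : 0 ≤ r K := hr K hK ▸ mul_nonneg (hμ K hK).le (hg K hK).1
    positivity
  have hβ_le : β ≤ g K := by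
    rw [div_le_iff₀ htotal_pos, hr K hK]
    calc K * (μ K * g K) = g K * (K * μ K) := by ring
      _ ≤ g K * (M * μ M) := mul_le_mul_of_nonneg_left (hmax hK) (hg K hK).1
  have hIcc : ∀ L ∈ Set.Icc 1 M, L ∈ Set.Icc 1 N := fun L hL => ⟨hL.1, hL.2.trans hM.2⟩
  refine ⟨hβ_le.trans (hg K hK).2, fun x hx => smul_mem_stabilityRegion_of_rate_le hK.1
    (fun L hL => mul_nonneg hβ_nonneg (hμ L (hIcc L hL)).le) (fun L hL hLK => ?_)
    (fun L hL _ => ?_) hx⟩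
  · rw [hr L (hIcc L hL), mul_comm]
    exact mul_le_mul_of_nonneg_left (hβ_le.trans (hg_anti (hIcc L hL) hK hLK))
      (hμ L (hIcc L hL)).le
  · calc L * (β * μ L) = β * (L * μ L) := by ring
      _ ≤ β * (M * μ M) := mul_le_mul_of_nonneg_left (hmax (hIcc L hL)) hβ_nonneg
      _ = K * r K := div_mul_cancel₀ _ htotal_pos.ne'

theorem one_sub_natCast_mul_mul_pos {θ C : ℝ} (hC : 0 < C) {N L : ℕ} (hNθ : N * θ < 1)
    (hLN : L ≤ N) : 0 < (1 - L * θ) * C := by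
  refine mul_pos (sub_pos.mpr ?_) hC
  rcases le_total 0 θ with hθ | hθ
  · exact lt_of_le_of_lt (by gcongr) hNθ
  · exact (mul_nonpos_of_nonneg_of_nonpos L.cast_nonneg hθ).trans_lt one_pos

theorem rpow_natCast_sub_one_mem_Icc {F : ℝ} (hF0 : 0 < F) (hF1 : F ≤ 1) {L : ℕ} (hL : 1 ≤ L) :
    F ^ ((L : ℝ) - 1) ∈ Set.Icc 0 1 :=
  ⟨by positivity, Real.rpow_le_one hF0.le hF1 (sub_nonneg.mpr (by exact_mod_cast hL))⟩

theorem antitone_rpow_natCast_sub_one {F : ℝ} (hF0 : 0 < F) (hF1 : F ≤ 1) :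
    Antitone fun L : ℕ => F ^ ((L : ℝ) - 1) := fun _ _ h =>
  Real.rpow_le_rpow_of_exponent_ge hF0 hF1 (by gcongr)

/-- In the symmetric system, let `r(L) = (1 - Lθ)·C·F^(L-1)` (imperfect case) and
`μ(L) = (1 - Lθ)·C` (perfect case), let `L_I` maximize `L·r(L)` and `L_P` maximize `L·μ(L)`
over `{1,…,N}`, and set `β = (L_I·r(L_I))/(L_P·μ(L_P))`. Then `β ≤ 1`, and `β` times any point
of the perfect-case stability region (the convex hull of `{0}` and the points `μ(L) • s`,
`s ∈ S_L`, `1 ≤ L ≤ L_P`) lies in the imperfect-case stability region (the convex hull of `{0}`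
and the points `r(L) • s`, `s ∈ S_L`, `1 ≤ L ≤ L_I`). -/
theorem imperfect_achieves_fraction_of_perfect
    (θ C F : ℝ) (hθ : 0 < θ) (hC : 0 < C) (hF0 : 0 < F) (hF1 : F < 1)
    (N : ℕ) (hN : 1 ≤ N) (hNθ : (N : ℝ) * θ < 1)
    (r μ : ℕ → ℝ)
    (hrdef : ∀ L, r L = (1 - (L : ℝ) * θ) * C * F ^ ((L : ℝ) - 1))
    (hμdef : ∀ L, μ L = (1 - (L : ℝ) * θ) * C)
    (L_I L_P : ℕ) (hLI1 : 1 ≤ L_I) (hLIN : L_I ≤ N) (hLP1 : 1 ≤ L_P) (hLPN : L_P ≤ N)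
    (hLImax : ∀ L, 1 ≤ L → L ≤ N → (L : ℝ) * r L ≤ (L_I : ℝ) * r L_I)
    (hLPmax : ∀ L, 1 ≤ L → L ≤ N → (L : ℝ) * μ L ≤ (L_P : ℝ) * μ L_P) :
    let β : ℝ := ((L_I : ℝ) * r L_I) / ((L_P : ℝ) * μ L_P)
    β ≤ 1 ∧
      ∀ x ∈ convexHull ℝ
          ({0} ∪ ⋃ L ∈ Set.Icc 1 L_P, (fun s => μ L • s) '' schedSet N L),
        β • x ∈ convexHull ℝ
          ({0} ∪ ⋃ L ∈ Set.Icc 1 L_I, (fun s => r L • s) '' schedSet N L) :=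
  imperfect_achieves_fraction_of_perfect_general
    (fun L hL => hμdef L ▸ one_sub_natCast_mul_mul_pos hC hNθ hL.2)
    (fun L hL => rpow_natCast_sub_one_mem_Icc hF0 hF1.le hL.1)
    ((antitone_rpow_natCast_sub_one hF0 hF1.le).antitoneOn _)
    (fun L _ => by rw [hrdef, hμdef]) ⟨hLI1, hLIN⟩ ⟨hLP1, hLPN⟩ (fun L hL => hLPmax L hL.1 hL.2)
end

section
/- Let N ≥ 1, let S_L ⊆ ℝ^N denote the set of 0-1 vectors with exactly L ones, let r : ℕ → ℝ be nonnegative, let r_svd > 0, and let 1 ≤ L_I ≤ N. Then the convex hull of {0} ∪ ⋃_{L=1}^{L_I} { r(L)·s : s ∈ S_L } is contained in the convex hull of {0} ∪ { r_svd·e_k : k = 1,…,N } if and only if L·r(L) ≤ r_svd for every L ∈ {1,…,L_I}. Equivalently, the interference-alignment stability region (partially) surpasses the TDMA-SVD stability region if and only if there exists L with 1 ≤ L ≤ L_I such that L·r(L) > r_svd. -/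
/-!
The TDMA-SVD region is the corner simplex `{x | 0 ≤ x ∧ ∑ i, x i ≤ r_svd}`. It is convex, so it
contains the IA region as soon as it contains the generators `r L • s`; these have nonnegative
coordinates with sum `L * r L`, so only the sum constraint matters.
-/

section CornerSimplex

/-- The simplex cut out of the nonnegative orthant of `ι → 𝕜` by bounding the sum of the coordinates
by `c`: the convex-geometric form of the TDMA-SVD stability region. -/
def cornerSimplex {𝕜 : Type*} [Semiring 𝕜] [PartialOrder 𝕜] (ι : Type*) [Fintype ι] (c : 𝕜) :
    Set (ι → 𝕜) :=
  {x | 0 ≤ x ∧ ∑ i, x i ≤ c}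

variable {𝕜 ι : Type*} [Fintype ι]

theorem convex_cornerSimplex [Semiring 𝕜] [PartialOrder 𝕜] [IsOrderedRing 𝕜] (c : 𝕜) :
    Convex 𝕜 (cornerSimplex ι c) := by
  have hsum : IsLinearMap 𝕜 fun x : ι → 𝕜 => ∑ i, x i :=
    ⟨fun x y => Finset.sum_add_distrib, fun a x => (Finset.mul_sum _ _ a).symm⟩
  exact (convex_Ici 0).inter (convex_halfSpace_le hsum c)

theorem zero_mem_cornerSimplex [Semiring 𝕜] [PartialOrder 𝕜] {c : 𝕜} (hc : 0 ≤ c) :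
    0 ∈ cornerSimplex ι c :=
  ⟨le_rfl, by simpa using hc⟩

theorem smul_single_mem_cornerSimplex [DecidableEq ι] [Semiring 𝕜] [PartialOrder 𝕜] {c : 𝕜}
    (hc : 0 ≤ c) (k : ι) : c • (Pi.single k 1 : ι → 𝕜) ∈ cornerSimplex ι c := by
  rw [← Pi.single_smul, smul_eq_mul, mul_one]
  exact ⟨Pi.single_nonneg.2 hc, by simp⟩

variable [Field 𝕜] [LinearOrder 𝕜] [IsStrictOrderedRing 𝕜]

theorem sum_smul_mem_of_sum_le_one {E : Type*} [AddCommGroup E] [Module 𝕜 E] {S : Set E}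
    (hS : Convex 𝕜 S) (h0 : 0 ∈ S) {w : ι → 𝕜} (hw : ∀ i, 0 ≤ w i) (hw1 : ∑ i, w i ≤ 1)
    {z : ι → E} (hz : ∀ i, z i ∈ S) : ∑ i, w i • z i ∈ S := by
  -- The missing weight `1 - ∑ i, w i` is placed at the origin.
  have hmem : ∑ o : Option ι, o.elim (1 - ∑ i, w i) w • o.elim 0 z ∈ S :=
    hS.sum_mem (Option.forall.2 ⟨fun _ => sub_nonneg.2 hw1, fun i _ => hw i⟩)
      (by simp [Fintype.sum_option]) (Option.forall.2 ⟨fun _ => h0, fun i _ => hz i⟩)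
  simpa [Fintype.sum_option] using hmem

theorem convexHull_zero_union_smul_single [DecidableEq ι] {c : 𝕜} (hc : 0 ≤ c) :
    convexHull 𝕜 ({0} ∪ {x : ι → 𝕜 | ∃ k, x = c • (Pi.single k 1 : ι → 𝕜)}) =
      cornerSimplex ι c := by
  apply subset_antisymm
  · refine convexHull_min ?_ (convex_cornerSimplex c)
    rintro _ (rfl | ⟨k, rfl⟩)
    · exact zero_mem_cornerSimplex hc
    · exact smul_single_mem_cornerSimplex hc k
  · rintro x ⟨hx, hxc⟩
    have hxc_apply (i : ι) : x i ≤ c :=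
      (Finset.single_le_sum (fun j _ => hx j) (Finset.mem_univ i)).trans hxc
    -- If `c = 0`, then `x i / c` is the junk value `0`, but `x i = 0` as well.
    have hdiv (i : ι) : x i / c * c = x i :=
      div_mul_cancel_of_imp fun hc0 => le_antisymm ((hxc_apply i).trans_eq hc0) (hx i)
    have hcomb : x = ∑ i, (x i / c) • c • (Pi.single i 1 : ι → 𝕜) := by
      simp_rw [smul_smul, hdiv]
      exact pi_eq_sum_univ' x
    rw [hcomb]
    refine sum_smul_mem_of_sum_le_one (convex_convexHull 𝕜 _) (subset_convexHull 𝕜 _ (.inl rfl))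
      (fun i => div_nonneg (hx i) hc) ?_ fun i => subset_convexHull 𝕜 _ (.inr ⟨i, rfl⟩)
    rw [← Finset.sum_div]
    exact div_le_one_of_le₀ hxc hc

end CornerSimplex

section SchedSet

variable {N L : ℕ}

theorem schedSet_nonempty (h : L ≤ N) : (schedSet N L).Nonempty := by
  obtain ⟨t, -, ht⟩ : ∃ t ⊆ (Finset.univ : Finset (Fin N)), t.card = L :=
    Finset.exists_subset_card_eq (by simpa using h)
  exact ⟨fun i => if i ∈ t then 1 else 0, fun i => (ite_eq_or_eq _ _ _).symm, by simp [ht]⟩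

theorem nonneg_of_mem_schedSet {s : Fin N → ℝ} (hs : s ∈ schedSet N L) : 0 ≤ s := fun i =>
  (hs.1 i).elim Eq.ge fun hi => zero_le_one.trans_eq hi.symm

theorem sum_smul_of_mem_schedSet {s : Fin N → ℝ} (hs : s ∈ schedSet N L) (a : ℝ) :
    ∑ i, (a • s) i = L * a := by
  simp only [Pi.smul_apply, smul_eq_mul, ← Finset.mul_sum, hs.2, mul_comm]

theorem smul_mem_cornerSimplex_iff_of_mem_schedSet {s : Fin N → ℝ} (hs : s ∈ schedSet N L)
    {a : ℝ} (ha : 0 ≤ a) (c : ℝ) : a • s ∈ cornerSimplex (Fin N) c ↔ L * a ≤ c := by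
  rw [← sum_smul_of_mem_schedSet hs a]
  exact and_iff_right (smul_nonneg ha (nonneg_of_mem_schedSet hs))

theorem image_smul_schedSet_subset_cornerSimplex_iff (hL : L ≤ N) {a : ℝ} (ha : 0 ≤ a) (c : ℝ) :
    (fun s => a • s) '' schedSet N L ⊆ cornerSimplex (Fin N) c ↔ L * a ≤ c := by
  rw [Set.image_subset_iff]
  obtain ⟨s₀, hs₀⟩ := schedSet_nonempty hL
  exact ⟨fun h => (smul_mem_cornerSimplex_iff_of_mem_schedSet hs₀ ha c).1 (h hs₀),
    fun h s hs => (smul_mem_cornerSimplex_iff_of_mem_schedSet hs ha c).2 h⟩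

end SchedSet

/-- The interference-alignment stability region (convex hull of `{0}` and the points
`r(L) • s`, `s ∈ S_L`, `1 ≤ L ≤ L_I`) is contained in the TDMA-SVD stability region (convex
hull of `{0}` and the points `r_svd • e_k`) if and only if `L·r(L) ≤ r_svd` for every
`1 ≤ L ≤ L_I`; equivalently, the IA region (partially) surpasses the TDMA-SVD region iff
there exists `1 ≤ L ≤ L_I` with `L·r(L) > r_svd`. -/
theorem IA_subset_TDMASVD_iff
    (N L_I : ℕ) (hN : 1 ≤ N) (hLI1 : 1 ≤ L_I) (hLIN : L_I ≤ N)
    (r : ℕ → ℝ) (hr : ∀ L, 0 ≤ r L) (r_svd : ℝ) (hsvd : 0 < r_svd) :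
    convexHull ℝ ({0} ∪ ⋃ L ∈ Set.Icc 1 L_I, (fun s => r L • s) '' schedSet N L)
        ⊆ convexHull ℝ ({0} ∪ {x : Fin N → ℝ | ∃ k, x = r_svd • (Pi.single k 1 : Fin N → ℝ)})
      ↔ ∀ L, 1 ≤ L → L ≤ L_I → (L : ℝ) * r L ≤ r_svd := by
  rw [convexHull_zero_union_smul_single hsvd.le, (convex_cornerSimplex r_svd).convexHull_subset_iff,
    Set.union_subset_iff, Set.singleton_subset_iff, Set.iUnion₂_subset_iff,
    and_iff_right (zero_mem_cornerSimplex hsvd.le)]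
  simp only [Set.mem_Icc, and_imp]
  exact forall₃_congr fun L _ hL =>
    image_smul_schedSet_subset_cornerSimplex_iff (hL.trans hLIN) (hr L) r_svd
end
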